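/- arXiv:2305.11925 — 2 statements merged into one kernel-verified Lean document; each statement's English description precedes it below -/
import Mathlib

section
/- Let (X,d) be a complete b-rectangular metric space with coefficient s > 1, T : X → X a mapping, and φ : X → [0,∞) a lower semicontinuous function. Suppose there exist k ∈ (0,1) and β₁, β₂, β₃ ≥ 0 with β₁ + β₂ + β₃ ≤ 1 such that for all x, y ∈ X, s²d(Tx,Ty) + φ(Tx) + φ(Ty) ≤ k[β₁(d(x,y) + φ(x) + φ(y)) + β₂(d(x,Tx) + φ(x) + φ(Tx)) + β₃(d(y,Ty) + φ(y) + φ(Ty))]. Then T has a unique fixed point. -/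
/-!
Write `D x = d(x, Tx) + φ x + φ (Tx)`. The contraction gives `D (Tx) ≤ k * D x`
(`defect_map_le`), so `D` decays geometrically along an orbit `xₙ = Tⁿ x₀`. If the orbit repeats a
point `x`, then `D x = 0` and `x` is fixed; otherwise the orbit is injective.

For an injective orbit no telescoping sum is needed. The rectangular inequality through `Tx` and
`Ty`, combined with the contraction, lets `d(x, y)` be absorbed into the left-hand side:
`(s - k) * d(x, y) ≤ (s² + 2) * (D x + D y)` (`dist_le_defect`). Hence the orbit is Cauchy, with
some limit `z`. As `φ xₙ → 0`, lower semicontinuity gives `φ z = 0`, and the same absorption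
argument bounds `d(z, Tz)` by a multiple of `d(xₙ, z) + D xₙ → 0` (`dist_limit_le`).

Fixed points have `φ = 0`, and then the contraction applied to two of them forces their
distance to vanish.
-/

open Filter Topology

/-- A b-rectangular metric space with coefficient `s`. -/
structure RectBMetric (X : Type*) (s : ℝ) where
  d : X → X → ℝ
  nonneg : ∀ x y, 0 ≤ d x y
  eq_iff : ∀ x y, d x y = 0 ↔ x = y
  symm : ∀ x y, d x y = d y x
  rect : ∀ x y u v : X, u ≠ v → u ≠ x → u ≠ y → v ≠ x → v ≠ y →
    d x y ≤ s * (d x u + d u v + d v y)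

namespace RectBMetric

variable {X : Type*} {s : ℝ}

/-- Convergence of a sequence in a b-rectangular metric space. -/
def TendstoSeq (B : RectBMetric X s) (x : ℕ → X) (l : X) : Prop :=
  Filter.Tendsto (fun n => B.d (x n) l) Filter.atTop (nhds 0)

/-- Cauchy sequences in a b-rectangular metric space. -/
def IsCauchySeq (B : RectBMetric X s) (x : ℕ → X) : Prop :=
  ∀ ε : ℝ, 0 < ε → ∃ N : ℕ, ∀ m ≥ N, ∀ n ≥ N, B.d (x m) (x n) < ε

/-- Completeness of a b-rectangular metric space. -/
def Complete (B : RectBMetric X s) : Prop :=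
  ∀ x : ℕ → X, B.IsCauchySeq x → ∃ l, B.TendstoSeq x l

/-- Lower semicontinuity of `φ : X → ℝ` with respect to a b-rectangular metric. -/
def LSC (B : RectBMetric X s) (φ : X → ℝ) : Prop :=
  ∀ (x : ℕ → X) (l : X), B.TendstoSeq x l →
    φ l ≤ Filter.liminf (fun n => φ (x n)) Filter.atTop

/-- The quantity `M(x,y,d,T,φ)`. -/
def Mfun (B : RectBMetric X s) (T : X → X) (φ : X → ℝ) (x y : X) : ℝ :=
  max (B.d x y + φ x + φ y)
    (max (B.d x (T x) + φ x + φ (T x)) (B.d y (T y) + φ y + φ (T y)))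

end RectBMetric

/-- An altering distance function on `[0,∞)`. -/
def AlteringDistance (ψ : ℝ → ℝ) : Prop :=
  ContinuousOn ψ (Set.Ici 0) ∧ MonotoneOn ψ (Set.Ici 0) ∧
    (∀ t ≥ (0:ℝ), 0 ≤ ψ t) ∧ (∀ t ≥ (0:ℝ), (ψ t = 0 ↔ t = 0))

/-- The class `Φᵤ`: continuous `ϕ : [0,∞) → [0,∞)` with `ϕ(t) > 0` for `t > 0`, `ϕ(0) ≥ 0`. -/
def PhiU (ϕ : ℝ → ℝ) : Prop :=
  ContinuousOn ϕ (Set.Ici 0) ∧ (∀ t : ℝ, 0 < t → 0 < ϕ t) ∧ 0 ≤ ϕ 0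

/-- C-class functions. -/
def CClass (F : ℝ → ℝ → ℝ) : Prop :=
  ContinuousOn (fun p : ℝ × ℝ => F p.1 p.2) (Set.Ici 0 ×ˢ Set.Ici 0) ∧
    (∀ a b : ℝ, 0 ≤ a → 0 ≤ b → F a b ≤ a) ∧
    (∀ a b : ℝ, 0 ≤ a → 0 ≤ b → F a b = a → a = 0 ∨ b = 0)

namespace RectBMetric

variable {X : Type*} {s : ℝ}

/-- The `φ`-weighted displacement `d(x, Tx) + φ x + φ (Tx)` of the point `x`. -/
def defect (B : RectBMetric X s) (T : X → X) (φ : X → ℝ) (x : X) : ℝ :=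
  B.d x (T x) + φ x + φ (T x)

/-- The contraction condition, written in terms of the displacement. -/
def Contr (B : RectBMetric X s) (T : X → X) (φ : X → ℝ) (k β₁ β₂ β₃ : ℝ) : Prop :=
  ∀ x y : X, s ^ 2 * B.d (T x) (T y) + φ (T x) + φ (T y) ≤
    k * (β₁ * (B.d x y + φ x + φ y) + β₂ * B.defect T φ x + β₃ * B.defect T φ y)

variable {B : RectBMetric X s} {T : X → X} {φ : X → ℝ} {k β₁ β₂ β₃ : ℝ}

lemma d_self (x : X) : B.d x x = 0 := (B.eq_iff x x).2 rfl

lemma defect_nonneg (hφ0 : ∀ x, 0 ≤ φ x) (x : X) : 0 ≤ B.defect T φ x := by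
  have := B.nonneg x (T x)
  have := hφ0 x
  have := hφ0 (T x)
  unfold defect
  linarith

lemma defect_map_le (hs : 1 < s) (hφ0 : ∀ x, 0 ≤ φ x) (hk0 : 0 < k) (hk1 : k < 1)
    (hβ₁ : 0 ≤ β₁) (hβ₂ : 0 ≤ β₂) (hβ₃ : 0 ≤ β₃) (hβsum : β₁ + β₂ + β₃ ≤ 1)
    (h : B.Contr T φ k β₁ β₂ β₃) (x : X) :
    B.defect T φ (T x) ≤ k * B.defect T φ x := by
  have h1 := h x (T x)
  change _ ≤ k * (β₁ * B.defect T φ x + β₂ * B.defect T φ x + β₃ * B.defect T φ (T x)) at h1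
  have h2 : B.defect T φ (T x) ≤ s ^ 2 * B.d (T x) (T (T x)) + φ (T x) + φ (T (T x)) := by
    have := B.nonneg (T x) (T (T x))
    unfold defect
    nlinarith [mul_nonneg (by nlinarith : 0 ≤ s ^ 2 - 1) this]
  have ha : 0 ≤ B.defect T φ x := defect_nonneg hφ0 x
  have hb : 0 ≤ B.defect T φ (T x) := defect_nonneg hφ0 (T x)
  generalize B.defect T φ x = a at *
  generalize B.defect T φ (T x) = b at *
  have h3 : b ≤ k * (β₁ * a + β₂ * a + β₃ * b) := h2.trans h1
  -- The bracket is at most `max a b`, and the maximum cannot be `b` unless `b = 0`.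
  rcases le_total b a with hba | hab
  · refine h3.trans (mul_le_mul_of_nonneg_left ?_ hk0.le)
    nlinarith [mul_le_mul_of_nonneg_left hba hβ₃]
  · have h4 : β₁ * a + β₂ * a + β₃ * b ≤ b := by
      nlinarith [mul_le_mul_of_nonneg_left hab hβ₁, mul_le_mul_of_nonneg_left hab hβ₂]
    have h5 : b ≤ k * b := h3.trans (mul_le_mul_of_nonneg_left h4 hk0.le)
    have h6 : b = 0 := by nlinarith
    have := mul_nonneg hk0.le ha
    linarith

/-- Rectangular inequality through `Tx` and `Ty`, with the term `d(Tx, Ty)` absorbed by the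
contraction. -/
lemma dist_le_defect (hs : 1 < s) (hφ0 : ∀ x, 0 ≤ φ x) (hk0 : 0 < k) (hk1 : k < 1)
    (hβ₁ : 0 ≤ β₁) (hβ₂ : 0 ≤ β₂) (hβ₃ : 0 ≤ β₃) (hβsum : β₁ + β₂ + β₃ ≤ 1)
    (h : B.Contr T φ k β₁ β₂ β₃) {x y : X} (h1 : T x ≠ T y) (h2 : T x ≠ x) (h3 : T x ≠ y)
    (h4 : T y ≠ x) (h5 : T y ≠ y) :
    (s - k) * B.d x y ≤ (s ^ 2 + 2) * (B.defect T φ x + B.defect T φ y) := by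
  have hr := B.rect x y (T x) (T y) h1 h2 h3 h4 h5
  rw [B.symm (T y) y] at hr
  have hc := h x y
  have ha : 0 ≤ B.defect T φ x := defect_nonneg hφ0 x
  have hb : 0 ≤ B.defect T φ y := defect_nonneg hφ0 y
  have hxa : B.d x (T x) + φ x ≤ B.defect T φ x := by
    have := hφ0 (T x); unfold defect; linarith
  have hyb : B.d y (T y) + φ y ≤ B.defect T φ y := by
    have := hφ0 (T y); unfold defect; linarith
  have hd := B.nonneg x y
  have := B.nonneg x (T x)
  have := B.nonneg y (T y)
  have := hφ0 x
  have := hφ0 y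
  have := hφ0 (T x)
  have := hφ0 (T y)
  generalize B.defect T φ x = a at *
  generalize B.defect T φ y = b at *
  have e1 : β₁ * (B.d x y + φ x + φ y) ≤ 1 * (B.d x y + φ x + φ y) :=
    mul_le_mul_of_nonneg_right (by linarith) (by linarith)
  have e2 : β₂ * a ≤ 1 * a := mul_le_mul_of_nonneg_right (by linarith) ha
  have e3 : β₃ * b ≤ 1 * b := mul_le_mul_of_nonneg_right (by linarith) hb
  have e4 : k * (β₁ * (B.d x y + φ x + φ y) + β₂ * a + β₃ * b)
      ≤ k * (B.d x y + 2 * (a + b)) :=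
    mul_le_mul_of_nonneg_left (by linarith) hk0.le
  have e5 : k * (2 * (a + b)) ≤ 1 * (2 * (a + b)) :=
    mul_le_mul_of_nonneg_right hk1.le (by linarith)
  have e6 : s ^ 2 * B.d (T x) (T y) ≤ k * B.d x y + 2 * (a + b) := by linarith
  have e7 : s * B.d x y ≤ s * (s * (B.d x (T x) + B.d (T x) (T y) + B.d y (T y))) :=
    mul_le_mul_of_nonneg_left hr (by linarith)
  have e8 : s ^ 2 * (B.d x (T x) + B.d y (T y)) ≤ s ^ 2 * (a + b) :=
    mul_le_mul_of_nonneg_left (by linarith) (sq_nonneg s)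
  linarith

/-- The analogue of `dist_le_defect` bounding the displacement of a zero `z` of `φ` by means of a
nearby point `x`. -/
lemma dist_limit_le (hs : 1 < s) (hφ0 : ∀ x, 0 ≤ φ x) (hk0 : 0 < k) (hk1 : k < 1)
    (hβ₁ : 0 ≤ β₁) (hβ₂ : 0 ≤ β₂) (hβ₃ : 0 ≤ β₃) (hβsum : β₁ + β₂ + β₃ ≤ 1)
    (h : B.Contr T φ k β₁ β₂ β₃) {x z : X} (hz : φ z = 0) (h1 : x ≠ T x) (h2 : x ≠ z)
    (h3 : x ≠ T z) (h4 : T x ≠ z) (h5 : T x ≠ T z) :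
    (s - k) * B.d z (T z) ≤ (s ^ 2 + 2) * (B.d x z + B.defect T φ x) := by
  have hr := B.rect z (T z) x (T x) h1 h2 h3 h4 h5
  rw [B.symm z x] at hr
  have hc := h x z
  have ha : 0 ≤ B.defect T φ x := defect_nonneg hφ0 x
  have hb : B.defect T φ z = B.d z (T z) + φ (T z) := by unfold defect; rw [hz]; ring
  rw [hb, hz] at hc
  have hxa : B.d x (T x) + φ x ≤ B.defect T φ x := by
    have := hφ0 (T x); unfold defect; linarith
  have hd := B.nonneg x z
  have hd' := B.nonneg z (T z)
  have := B.nonneg x (T x)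
  have := hφ0 x
  have := hφ0 (T x)
  have := hφ0 (T z)
  generalize B.defect T φ x = a at *
  have e1 : β₁ * (B.d x z + φ x + 0) ≤ 1 * (B.d x z + φ x + 0) :=
    mul_le_mul_of_nonneg_right (by linarith) (by linarith)
  have e2 : β₂ * a ≤ 1 * a := mul_le_mul_of_nonneg_right (by linarith) ha
  have e3 : β₃ * (B.d z (T z) + φ (T z)) ≤ 1 * (B.d z (T z) + φ (T z)) :=
    mul_le_mul_of_nonneg_right (by linarith) (by linarith)
  have e4 : k * (β₁ * (B.d x z + φ x + 0) + β₂ * a + β₃ * (B.d z (T z) + φ (T z)))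
      ≤ k * (B.d z (T z) + (B.d x z + 2 * a + φ (T z))) :=
    mul_le_mul_of_nonneg_left (by linarith) hk0.le
  have e5 : k * (B.d x z + 2 * a + φ (T z)) ≤ 1 * (B.d x z + 2 * a + φ (T z)) :=
    mul_le_mul_of_nonneg_right hk1.le (by linarith)
  have e6 : s ^ 2 * B.d (T x) (T z) ≤ k * B.d z (T z) + (B.d x z + 2 * a) := by linarith
  have e7 : s * B.d z (T z) ≤ s * (s * (B.d x z + B.d x (T x) + B.d (T x) (T z))) :=
    mul_le_mul_of_nonneg_left hr (by linarith)
  have e8 : s ^ 2 * (B.d x z + B.d x (T x)) ≤ s ^ 2 * (B.d x z + a) :=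
    mul_le_mul_of_nonneg_left (by linarith) (sq_nonneg s)
  linarith

lemma fixed_unique (hs : 1 < s) (hφ0 : ∀ x, 0 ≤ φ x) (hk0 : 0 < k) (hk1 : k < 1)
    (hβ₁ : 0 ≤ β₁) (hβ₂ : 0 ≤ β₂) (hβ₃ : 0 ≤ β₃) (hβsum : β₁ + β₂ + β₃ ≤ 1)
    (h : B.Contr T φ k β₁ β₂ β₃) {z w : X} (hz : T z = z) (hw : T w = w) : z = w := by
  have key : ∀ x, T x = x → φ x = 0 ∧ B.defect T φ x = 0 := by
    intro x hx
    -- At a fixed point the defect is `2 φ x`, and it is contracted into itself.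
    have h1 := defect_map_le hs hφ0 hk0 hk1 hβ₁ hβ₂ hβ₃ hβsum h x
    rw [hx] at h1
    have h2 : B.defect T φ x = 0 := by nlinarith [defect_nonneg (B := B) (T := T) hφ0 x]
    refine ⟨?_, h2⟩
    unfold defect at h2
    rw [hx, d_self] at h2
    linarith
  obtain ⟨hz1, hz2⟩ := key z hz
  obtain ⟨hw1, hw2⟩ := key w hw
  have h1 := h z w
  rw [hz, hw, hz1, hw1, hz2, hw2] at h1
  have hd := B.nonneg z w
  have e1 : β₁ * B.d z w ≤ 1 * B.d z w := mul_le_mul_of_nonneg_right (by linarith) hd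
  have e2 : k * (β₁ * B.d z w) ≤ k * (1 * B.d z w) := mul_le_mul_of_nonneg_left e1 hk0.le
  have e3 : 1 * B.d z w ≤ s ^ 2 * B.d z w := mul_le_mul_of_nonneg_right (by nlinarith) hd
  exact (B.eq_iff z w).1 (by nlinarith)

end RectBMetric

open RectBMetric

theorem stmt12 {X : Type*} [Nonempty X] {s : ℝ} (hs : 1 < s) (B : RectBMetric X s)
    (hcomp : B.Complete) (T : X → X) (φ : X → ℝ) (hφ0 : ∀ x, 0 ≤ φ x)
    (hφ : B.LSC φ) (k β₁ β₂ β₃ : ℝ) (hk0 : 0 < k) (hk1 : k < 1)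
    (hβ₁ : 0 ≤ β₁) (hβ₂ : 0 ≤ β₂) (hβ₃ : 0 ≤ β₃) (hβsum : β₁ + β₂ + β₃ ≤ 1)
    (hcontr : ∀ x y : X,
      s ^ 2 * B.d (T x) (T y) + φ (T x) + φ (T y) ≤
        k * (β₁ * (B.d x y + φ x + φ y) + β₂ * (B.d x (T x) + φ x + φ (T x))
          + β₃ * (B.d y (T y) + φ y + φ (T y)))) :
    ∃! z : X, T z = z := by
  have h : B.Contr T φ k β₁ β₂ β₃ := hcontr
  suffices hex : ∃ z, T z = z by
    obtain ⟨z, hz⟩ := hex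
    exact ⟨z, hz, fun w hw => fixed_unique hs hφ0 hk0 hk1 hβ₁ hβ₂ hβ₃ hβsum h hw hz⟩
  by_contra! hno
  obtain ⟨x₀⟩ := ‹Nonempty X›
  set x : ℕ → X := fun n => T^[n] x₀ with hx
  have hxs : ∀ n, T (x n) = x (n + 1) := fun n => (Function.iterate_succ_apply' T n x₀).symm
  set D : ℕ → ℝ := fun n => B.defect T φ (x n) with hD
  have hD0 : ∀ n, 0 ≤ D n := fun n => defect_nonneg hφ0 _
  have hstep : ∀ n, D (n + 1) ≤ k * D n := by
    intro n
    have := defect_map_le hs hφ0 hk0 hk1 hβ₁ hβ₂ hβ₃ hβsum h (x n)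
    rwa [hxs] at this
  have hanti : Antitone D := antitone_nat_of_succ_le fun n => by
    nlinarith [hstep n, hD0 n]
  have hdD : ∀ n, B.d (x n) (x (n + 1)) ≤ D n := by
    intro n
    have h1 := hφ0 (x n)
    have h2 := hφ0 (x (n + 1))
    simp only [hD, RectBMetric.defect, hxs]
    linarith
  have hDpos : ∀ n, 0 < D n := by
    intro n
    refine lt_of_lt_of_le (lt_of_le_of_ne (B.nonneg _ _) fun h0 => ?_) (hdD n)
    exact hno (x n) ((hxs n).trans ((B.eq_iff _ _).1 h0.symm).symm)
  have hlt : StrictAnti D := strictAnti_nat_of_succ_lt fun n => by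
    nlinarith [hstep n, hDpos n]
  -- `D n` depends only on the point `x n`, so a strictly decreasing `D` forces distinct points.
  have hinj : Function.Injective x := fun m n hmn =>
    hlt.injective (congrArg (B.defect T φ) hmn)
  have hDlim : Tendsto D atTop (𝓝 0) := by
    have hle : ∀ n, D n ≤ k ^ n * D 0 := by
      intro n
      induction n with
      | zero => simp
      | succ n ih =>
        calc D (n + 1) ≤ k * D n := hstep n
          _ ≤ k * (k ^ n * D 0) := mul_le_mul_of_nonneg_left ih hk0.le
          _ = k ^ (n + 1) * D 0 := by ring
    have hg := (tendsto_pow_atTop_nhds_zero_of_lt_one hk0.le hk1).mul_const (D 0)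
    rw [zero_mul] at hg
    exact squeeze_zero hD0 hle hg
  have hC : 0 < s - k := by linarith
  have hadj : ∀ n, (s - k) * B.d (x n) (x (n + 1)) ≤ (s ^ 2 + 2) * D n := fun n =>
    mul_le_mul (by nlinarith) (hdD n) (B.nonneg _ _) (by positivity)
  have hdist : ∀ m n, (s - k) * B.d (x m) (x n) ≤ (s ^ 2 + 2) * (D m + D n) := by
    intro m n
    have hm : 0 ≤ (s ^ 2 + 2) * D m := mul_nonneg (by positivity) (hD0 m)
    have hn : 0 ≤ (s ^ 2 + 2) * D n := mul_nonneg (by positivity) (hD0 n)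
    rw [mul_add]
    -- Equal or adjacent indices violate the distinctness needed for the rectangular inequality.
    by_cases h0 : m = n
    · rw [h0, d_self, mul_zero, ← h0]; linarith
    by_cases h1 : n = m + 1
    · subst h1
      linarith [hadj m]
    by_cases h2 : m = n + 1
    · subst h2
      rw [B.symm]
      linarith [hadj n]
    rw [← mul_add]
    refine dist_le_defect hs hφ0 hk0 hk1 hβ₁ hβ₂ hβ₃ hβsum h ?_ (hno _) ?_ ?_ (hno _) <;>
      simp only [hxs] <;> refine hinj.ne ?_ <;> omega
  have hcau : B.IsCauchySeq x := by
    intro ε hε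
    have hlim : Tendsto (fun n => (s ^ 2 + 2) * (D n + D n)) atTop (𝓝 0) := by
      simpa using (hDlim.add hDlim).const_mul (s ^ 2 + 2)
    obtain ⟨N, hN⟩ := (hlim.eventually_lt_const (mul_pos hC hε)).exists
    refine ⟨N, fun m hm n hn => lt_of_mul_lt_mul_left ?_ hC.le⟩
    refine ((hdist m n).trans ?_).trans_lt hN
    exact mul_le_mul_of_nonneg_left (add_le_add (hanti hm) (hanti hn)) (by positivity)
  obtain ⟨z, hz⟩ := hcomp x hcau
  have hφD : ∀ n, φ (x n) ≤ D n := by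
    intro n
    have h1 := B.nonneg (x n) (T (x n))
    have h2 := hφ0 (T (x n))
    simp only [hD, RectBMetric.defect]
    linarith
  have hφz : φ z = 0 := by
    have hl : Tendsto (fun n => φ (x n)) atTop (𝓝 0) :=
      squeeze_zero (fun n => hφ0 _) hφD hDlim
    have := hφ x z hz
    rw [hl.liminf_eq] at this
    exact le_antisymm this (hφ0 z)
  -- An injective sequence leaves every point eventually.
  have hev : ∀ p, ∀ᶠ n in atTop, x n ≠ p := fun p =>
    by
    have := hinj.tendsto_cofinite.eventually (Set.finite_singleton p).compl_mem_cofinite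
    rwa [Nat.cofinite_eq_atTop] at this
  have hev' : ∀ p, ∀ᶠ n in atTop, x (n + 1) ≠ p := fun p =>
    (tendsto_add_atTop_nat 1).eventually (hev p)
  have hbound : ∀ᶠ n in atTop,
      (s - k) * B.d z (T z) ≤ (s ^ 2 + 2) * (B.d (x n) z + D n) := by
    filter_upwards [hev z, hev (T z), hev' z, hev' (T z)] with n h1 h2 h3 h4
    exact dist_limit_le hs hφ0 hk0 hk1 hβ₁ hβ₂ hβ₃ hβsum h hφz (hno _).symm h1 h2
      (by rwa [hxs]) (by rwa [hxs])
  have hlim : Tendsto (fun n => (s ^ 2 + 2) * (B.d (x n) z + D n)) atTop (𝓝 0) := by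
    simpa using (Tendsto.add hz hDlim).const_mul (s ^ 2 + 2)
  have hle : (s - k) * B.d z (T z) ≤ 0 := ge_of_tendsto hlim hbound
  have hd0 : B.d z (T z) = 0 :=
    le_antisymm (nonpos_of_mul_nonpos_right hle hC) (B.nonneg _ _)
  exact hno z ((B.eq_iff _ _).1 hd0).symm
end

section
/- Let (X,d) be a complete b-rectangular metric space with coefficient s ≥ 1, T : X → X a mapping, and φ : X → [0,∞) a lower semicontinuous function. Let ψ be an altering distance function, ϕ ∈ Φ_u, and a > 1 a real number. Suppose that for all x, y ∈ X, ψ(s²d(Tx,Ty) + φ(Tx) + φ(Ty)) ≤ ψ(M(x,y)) · log_{a + ϕ(M(x,y))}(a), where M(x,y) = max{d(x,y)+φ(x)+φ(y), d(x,Tx)+φ(x)+φ(Tx), d(y,Ty)+φ(y)+φ(Ty)} and log_b denotes the logarithm to base b. Then T has a unique fixed point. -/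
/-!
Write `w x y = d x y + φ x + φ y`, so that `M x y = max (w x y) (max (w x (T x)) (w y (T y)))`.
For `t > 0` the factor `log_{a + ϕ t} a` is less than `1`; by compactness the hypothesis then gives
a uniform gap: as long as `M x y` ranges in a compact subinterval of `(0, ∞)`, the left-hand
quantity `s² d (T x) (T y) + φ (T x) + φ (T y)` is at most `M x y - δ` for a fixed `δ > 0`
(`altering_gap`, `gapContr_of_log`). The functions `ψ` and `ϕ` play no further role.

Along a Picard orbit without fixed points, the numbers `w (x n) (x (n + 1))` strictly decrease to
`0` (`orbit_step_strictAnti`, `orbit_step_tendsto`), so the orbit is injective, which is what makes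
the rectangular inequality applicable; `d (x n) (x (n + 2))` tends to `0` for a similar reason
(`orbit_two_step_tendsto`). In `orbit_cauchy`, `d (x m) (x (m + k)) < ε` is proved for all large `m`
by strong induction on `k`: the rectangular inequality through `x (m + k - 2)`, `x (m + k - 1)`
bounds this distance, and then, were it at least `ε`, the one through `x (m + 1)`, `x (m + k + 1)`
would contradict the gap. Lower semicontinuity gives `φ z = 0` at the limit `z`, and comparing `x n`
with `z` gives `T z = z`.
-/

open Filter Topology

/-! ### The gap condition -/

namespace RectBMetric

/-- The distance of two points increased by the values of `φ` at both. -/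
def wdist {X : Type*} {s : ℝ} (B : RectBMetric X s) (φ : X → ℝ) (x y : X) : ℝ :=
  B.d x y + φ x + φ y

/-- The contraction condition with `ψ` and `ϕ` eliminated: the left-hand quantity never exceeds
`M x y`, and stays below it by a uniform amount while `M x y` ranges in a compact subinterval of
`(0, ∞)`. -/
def GapContr {X : Type*} {s : ℝ} (B : RectBMetric X s) (T : X → X) (φ : X → ℝ) : Prop :=
  (∀ x y, s ^ 2 * B.d (T x) (T y) + φ (T x) + φ (T y) ≤ B.Mfun T φ x y) ∧
  ∀ ε K : ℝ, 0 < ε → ∃ δ > 0, ∀ x y, ε ≤ B.Mfun T φ x y → B.Mfun T φ x y ≤ K →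
    s ^ 2 * B.d (T x) (T y) + φ (T x) + φ (T y) + δ ≤ B.Mfun T φ x y

end RectBMetric

open RectBMetric

/-- On `[ε, K]` the continuous function `ψ t - ψ t * log_{a + ϕ t} a` has a positive minimum, and
uniform continuity of `ψ` converts this deficit in values into a gap in arguments. -/
theorem altering_gap {ψ ϕ : ℝ → ℝ} (hψ : AlteringDistance ψ) (hϕ : PhiU ϕ) {a : ℝ} (ha : 1 < a)
    (ε K : ℝ) (hε : 0 < ε) :
    ∃ δ > 0, ∀ u t : ℝ, 0 ≤ u → ε ≤ t → t ≤ K →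
      ψ u ≤ ψ t * Real.logb (a + ϕ t) a → u + δ ≤ t := by
  obtain ⟨hc, hm, hnn, h0⟩ := hψ
  obtain ⟨hϕc, hϕp, -⟩ := hϕ
  rcases lt_or_ge K ε with hK | hK
  · exact ⟨1, one_pos, fun u t _ h1 h2 _ => by linarith⟩
  have hsub : Set.Icc ε K ⊆ Set.Ici 0 := fun t ht => hε.le.trans ht.1
  have hla : 0 < Real.log a := Real.log_pos ha
  have hlog : ∀ t ∈ Set.Icc ε K, Real.log a < Real.log (a + ϕ t) := fun t ht =>
    Real.log_lt_log (by linarith) (by linarith [hϕp t (hε.trans_le ht.1)])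
  have hcont : ContinuousOn (fun t => ψ t - ψ t * Real.logb (a + ϕ t) a) (Set.Icc ε K) := by
    have h1 := hc.mono hsub
    have h2 := hϕc.mono hsub
    have h3 : ContinuousOn (fun t => Real.log (a + ϕ t)) (Set.Icc ε K) :=
      (continuousOn_const.add h2).log
        (fun t ht => (add_pos (one_pos.trans ha) (hϕp t (hε.trans_le ht.1))).ne')
    have h4 : ContinuousOn (fun t => Real.logb (a + ϕ t) a) (Set.Icc ε K) := by
      unfold Real.logb
      exact continuousOn_const.div h3 (fun t ht => (hla.trans (hlog t ht)).ne')
    exact h1.sub (h1.mul h4)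
  have hpos : ∀ t ∈ Set.Icc ε K, 0 < ψ t - ψ t * Real.logb (a + ϕ t) a := by
    intro t ht
    have htp : 0 < t := hε.trans_le ht.1
    have h1 : 0 < ψ t := lt_of_le_of_ne (hnn t htp.le)
      (fun h => htp.ne' ((h0 t htp.le).1 h.symm))
    have h2 : Real.logb (a + ϕ t) a < 1 := by
      rw [Real.logb, div_lt_one (hla.trans (hlog t ht))]
      exact hlog t ht
    nlinarith
  obtain ⟨t₀, ht₀, hmin⟩ := isCompact_Icc.exists_isMinOn ⟨ε, le_refl ε, hK⟩ hcont
  have huc : UniformContinuousOn ψ (Set.Icc 0 K) :=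
    isCompact_Icc.uniformContinuousOn_of_continuous (hc.mono fun t ht => ht.1)
  obtain ⟨δ, hδ, hδu⟩ := Metric.uniformContinuousOn_iff.1 huc _ (hpos t₀ ht₀)
  have hδ1 : 0 < min (δ / 2) (ε / 2) := lt_min (by linarith) (by linarith)
  refine ⟨min (δ / 2) (ε / 2), hδ1, fun u t hu h1 h2 h => ?_⟩
  by_contra! hlt
  have e1 := min_le_left (δ / 2) (ε / 2)
  have e2 := min_le_right (δ / 2) (ε / 2)
  set r := min (δ / 2) (ε / 2)
  have h3 := hδu t ⟨by linarith, h2⟩ (t - r) ⟨by linarith, by linarith⟩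
    (by rw [Real.dist_eq, sub_sub_cancel, abs_of_pos hδ1]; linarith)
  rw [Real.dist_eq] at h3
  have h4 := (abs_lt.1 h3).2
  have h5 : ψ (t - r) ≤ ψ u :=
    hm (show (0:ℝ) ≤ t - r by linarith) (show (0:ℝ) ≤ u from hu) (by linarith)
  have h6 := isMinOn_iff.1 hmin t ⟨h1, h2⟩
  linarith

section

variable {X : Type*} {s : ℝ} {B : RectBMetric X s} {T : X → X} {φ : X → ℝ}

theorem wdist_nonneg (hφ0 : ∀ x, 0 ≤ φ x) (x y : X) : 0 ≤ B.wdist φ x y :=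
  add_nonneg (add_nonneg (B.nonneg x y) (hφ0 x)) (hφ0 y)

theorem Mfun_eq (x y : X) : B.Mfun T φ x y =
    max (B.wdist φ x y) (max (B.wdist φ x (T x)) (B.wdist φ y (T y))) := rfl

theorem Mfun_nonneg (hφ0 : ∀ x, 0 ≤ φ x) (x y : X) : 0 ≤ B.Mfun T φ x y :=
  (wdist_nonneg hφ0 x y).trans (le_max_left _ _)

theorem d_le_sq_mul (hs : 1 ≤ s) (x y : X) : B.d x y ≤ s ^ 2 * B.d x y :=
  le_mul_of_one_le_left (B.nonneg x y) (one_le_pow₀ hs)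

theorem gapContr_of_log (hφ0 : ∀ x, 0 ≤ φ x) {ψ ϕ : ℝ → ℝ} (hψ : AlteringDistance ψ)
    (hϕ : PhiU ϕ) {a : ℝ} (ha : 1 < a)
    (hcontr : ∀ x y : X,
      ψ (s ^ 2 * B.d (T x) (T y) + φ (T x) + φ (T y)) ≤
        ψ (B.Mfun T φ x y) * Real.logb (a + ϕ (B.Mfun T φ x y)) a) :
    B.GapContr T φ := by
  have hL : ∀ x y, 0 ≤ s ^ 2 * B.d (T x) (T y) + φ (T x) + φ (T y) := fun x y =>
    add_nonneg (add_nonneg (mul_nonneg (sq_nonneg s) (B.nonneg _ _)) (hφ0 _)) (hφ0 _)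
  refine ⟨fun x y => ?_, fun ε K hε => ?_⟩
  · rcases (Mfun_nonneg (B := B) (T := T) hφ0 x y).eq_or_lt with h | h
    · have h1 := hcontr x y
      rw [← h, (hψ.2.2.2 0 le_rfl).2 rfl, zero_mul] at h1
      rw [← h]
      exact ((hψ.2.2.2 _ (hL x y)).1 (le_antisymm h1 (hψ.2.2.1 _ (hL x y)))).le
    · obtain ⟨δ, hδ, H⟩ := altering_gap hψ hϕ ha _ (B.Mfun T φ x y) h
      linarith [H _ _ (hL x y) le_rfl le_rfl (hcontr x y)]
  · obtain ⟨δ, hδ, H⟩ := altering_gap hψ hϕ ha ε K hε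
    exact ⟨δ, hδ, fun x y h1 h2 => H _ _ (hL x y) h1 h2 (hcontr x y)⟩

theorem GapContr.lt (hG : B.GapContr T φ) {x y : X} (h : 0 < B.Mfun T φ x y) :
    s ^ 2 * B.d (T x) (T y) + φ (T x) + φ (T y) < B.Mfun T φ x y := by
  obtain ⟨δ, hδ, H⟩ := hG.2 _ (B.Mfun T φ x y) h
  linarith [H x y le_rfl le_rfl]

/-! ### Uniqueness of fixed points -/

theorem fixed_phi_eq_zero (hφ0 : ∀ x, 0 ≤ φ x) (hG : B.GapContr T φ) {z : X} (hz : T z = z) :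
    φ z = 0 := by
  by_contra h
  have hp : 0 < φ z := lt_of_le_of_ne (hφ0 z) (Ne.symm h)
  have hd : B.d z z = 0 := (B.eq_iff z z).2 rfl
  have hM : B.Mfun T φ z z = φ z + φ z := by
    simp [Mfun_eq, wdist, hz, hd]
  have := GapContr.lt hG (x := z) (y := z) (by rw [hM]; linarith)
  rw [hM, hz, hd] at this
  linarith

theorem fixed_unique (hs : 1 ≤ s) (hφ0 : ∀ x, 0 ≤ φ x) (hG : B.GapContr T φ) {z w : X}
    (hz : T z = z) (hw : T w = w) : z = w := by
  by_contra h
  have hp : 0 < B.d z w := lt_of_le_of_ne (B.nonneg z w) (fun e => h ((B.eq_iff z w).1 e.symm))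
  have hM : B.Mfun T φ z w = B.d z w := by
    simp [Mfun_eq, wdist, hz, hw, (B.eq_iff z z).2 rfl, (B.eq_iff w w).2 rfl,
      fixed_phi_eq_zero hφ0 hG hz, fixed_phi_eq_zero hφ0 hG hw, hp.le]
  have h1 := GapContr.lt hG (x := z) (y := w) (by rw [hM]; exact hp)
  rw [hM, hz, hw] at h1
  linarith [d_le_sq_mul (B := B) hs z w, hφ0 z, hφ0 w]

/-! ### Asymptotic regularity of Picard orbits -/

/-- The limit of `H` cannot be positive: once `H n` is within `δ` of it, the next term would fall
below it. -/
theorem tendsto_zero_of_gap {H : ℕ → ℝ} (h0 : ∀ n, 0 ≤ H n) (hanti : Antitone H)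
    (hgap : ∀ ε > 0, ∃ δ > 0, ∃ N, ∀ n ≥ N, ε ≤ H n → H (n + 1) + δ ≤ H n) :
    Tendsto H atTop (𝓝 0) := by
  have hbdd : BddBelow (Set.range H) := ⟨0, by rintro _ ⟨n, rfl⟩; exact h0 n⟩
  have hlim := tendsto_atTop_ciInf hanti hbdd
  have hle : ∀ n, ⨅ i, H i ≤ H n := fun n => ciInf_le hbdd n
  rcases (le_ciInf h0 : 0 ≤ ⨅ i, H i).eq_or_lt with h | h
  · rwa [← h] at hlim
  · obtain ⟨δ, hδ, N, hN⟩ := hgap _ h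
    obtain ⟨n, hn, hnN⟩ := ((hlim.eventually_lt_const
      (show ⨅ i, H i < (⨅ i, H i) + δ by linarith)).and (eventually_ge_atTop N)).exists
    linarith [hN n hnN (hle n), hle (n + 1)]

variable {x : ℕ → X}

theorem orbit_step_antitone (hs : 1 ≤ s) (hφ0 : ∀ x, 0 ≤ φ x) (hG : B.GapContr T φ)
    (hx : ∀ n, x (n + 1) = T (x n)) : Antitone fun n => B.wdist φ (x n) (x (n + 1)) := by
  refine antitone_nat_of_succ_le fun n => ?_
  by_contra! h
  have hM : B.Mfun T φ (x n) (x (n + 1)) = B.wdist φ (x (n + 1)) (x (n + 1 + 1)) := by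
    rw [Mfun_eq, ← hx, ← hx, ← max_assoc, max_self, max_eq_right h.le]
  have h1 := GapContr.lt hG (x := x n) (y := x (n + 1))
    (by rw [hM]; exact (wdist_nonneg hφ0 _ _).trans_lt h)
  rw [hM, ← hx, ← hx, wdist] at h1
  linarith [d_le_sq_mul (B := B) hs (x (n + 1)) (x (n + 1 + 1))]

theorem orbit_Mfun_step (hs : 1 ≤ s) (hφ0 : ∀ x, 0 ≤ φ x) (hG : B.GapContr T φ)
    (hx : ∀ n, x (n + 1) = T (x n)) (n : ℕ) :
    B.Mfun T φ (x n) (x (n + 1)) = B.wdist φ (x n) (x (n + 1)) := by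
  rw [Mfun_eq, ← hx, ← hx, ← max_assoc, max_self]
  exact max_eq_left (orbit_step_antitone hs hφ0 hG hx n.le_succ)

theorem orbit_step_strictAnti (hs : 1 ≤ s) (hφ0 : ∀ x, 0 ≤ φ x) (hG : B.GapContr T φ)
    (hx : ∀ n, x (n + 1) = T (x n)) (hne : ∀ n, x n ≠ x (n + 1)) :
    StrictAnti fun n => B.wdist φ (x n) (x (n + 1)) := by
  refine strictAnti_nat_of_succ_lt fun n => ?_
  have hM := orbit_Mfun_step hs hφ0 hG hx n
  have hd : 0 < B.d (x n) (x (n + 1)) :=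
    lt_of_le_of_ne (B.nonneg _ _) (fun e => hne n ((B.eq_iff _ _).1 e.symm))
  have h1 := GapContr.lt hG (x := x n) (y := x (n + 1))
    (by rw [hM, wdist]; linarith [hφ0 (x n), hφ0 (x (n + 1))])
  rw [hM, ← hx, ← hx] at h1
  have h2 := d_le_sq_mul (B := B) hs (x (n + 1)) (x (n + 1 + 1))
  have h3 : B.wdist φ (x (n + 1)) (x (n + 1 + 1)) =
    B.d (x (n + 1)) (x (n + 1 + 1)) + φ (x (n + 1)) + φ (x (n + 1 + 1)) := rfl
  linarith

/-- `x m = x n` forces equal one-step quantities, which are strictly decreasing. -/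
theorem orbit_injective (hs : 1 ≤ s) (hφ0 : ∀ x, 0 ≤ φ x) (hG : B.GapContr T φ)
    (hx : ∀ n, x (n + 1) = T (x n)) (hne : ∀ n, x n ≠ x (n + 1)) : Function.Injective x := by
  intro m n h
  apply (orbit_step_strictAnti hs hφ0 hG hx hne).injective
  simp only [hx, h]

theorem orbit_step_tendsto (hs : 1 ≤ s) (hφ0 : ∀ x, 0 ≤ φ x) (hG : B.GapContr T φ)
    (hx : ∀ n, x (n + 1) = T (x n)) :
    Tendsto (fun n => B.wdist φ (x n) (x (n + 1))) atTop (𝓝 0) := by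
  have hanti := orbit_step_antitone hs hφ0 hG hx
  refine tendsto_zero_of_gap (fun n => wdist_nonneg hφ0 _ _) hanti fun ε hε => ?_
  obtain ⟨δ, hδ, H⟩ := hG.2 ε (B.wdist φ (x 0) (x (0 + 1))) hε
  refine ⟨δ, hδ, 0, fun n _ hn => ?_⟩
  have hM := orbit_Mfun_step hs hφ0 hG hx n
  have h1 := H (x n) (x (n + 1)) (by rw [hM]; exact hn) (by rw [hM]; exact hanti n.zero_le)
  rw [hM, ← hx, ← hx] at h1
  have h2 := d_le_sq_mul (B := B) hs (x (n + 1)) (x (n + 1 + 1))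
  have h3 : B.wdist φ (x (n + 1)) (x (n + 1 + 1)) =
    B.d (x (n + 1)) (x (n + 1 + 1)) + φ (x (n + 1)) + φ (x (n + 1 + 1)) := rfl
  linarith

/-- Two-step distances are the base case that the rectangular inequality cannot reach from one-step
distances. -/
theorem orbit_two_step_tendsto (hs : 1 ≤ s) (hφ0 : ∀ x, 0 ≤ φ x) (hG : B.GapContr T φ)
    (hx : ∀ n, x (n + 1) = T (x n)) :
    Tendsto (fun n => B.d (x n) (x (n + 2))) atTop (𝓝 0) := by
  have hanti := orbit_step_antitone hs hφ0 hG hx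
  -- The two-step quantity alone need not be monotone; its maximum with the one-step one is.
  set H : ℕ → ℝ := fun n => B.Mfun T φ (x n) (x (n + 2)) with hH
  have hHe : ∀ n, H n = max (B.wdist φ (x n) (x (n + 2))) (B.wdist φ (x n) (x (n + 1))) := by
    intro n
    have h : B.wdist φ (x (n + 2)) (x (n + 2 + 1)) ≤ B.wdist φ (x n) (x (n + 1)) :=
      hanti (by omega : n ≤ n + 2)
    simp only [hH]
    rw [Mfun_eq, ← hx, ← hx, max_eq_left h]
  have hstep : ∀ n, B.wdist φ (x (n + 1)) (x (n + 1 + 2)) ≤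
      s ^ 2 * B.d (T (x n)) (T (x (n + 2))) + φ (T (x n)) + φ (T (x (n + 2))) := by
    intro n
    rw [← hx, ← hx]
    have h2 := d_le_sq_mul (B := B) hs (x (n + 1)) (x (n + 2 + 1))
    have h3 : B.wdist φ (x (n + 1)) (x (n + 1 + 2)) =
      B.d (x (n + 1)) (x (n + 2 + 1)) + φ (x (n + 1)) + φ (x (n + 2 + 1)) := rfl
    linarith
  have hHanti : Antitone H := by
    refine antitone_nat_of_succ_le fun n => ?_
    rw [hHe (n + 1)]
    refine max_le ((hstep n).trans (hG.1 _ _)) ?_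
    rw [hHe n]
    exact (hanti n.le_succ).trans (le_max_right _ _)
  have hlim : Tendsto H atTop (𝓝 0) := by
    refine tendsto_zero_of_gap (fun n => Mfun_nonneg hφ0 _ _) hHanti fun ε hε => ?_
    obtain ⟨δ, hδ, hg⟩ := hG.2 ε (H 0) hε
    obtain ⟨N, hN⟩ := eventually_atTop.1
      ((orbit_step_tendsto hs hφ0 hG hx).eventually_lt_const (half_pos hε))
    refine ⟨min δ (ε / 2), lt_min hδ (half_pos hε), N, fun n hn h => ?_⟩
    have h1 : H n = B.Mfun T φ (x n) (x (n + 2)) := rfl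
    have h2 := hg (x n) (x (n + 2)) h (hHanti n.zero_le)
    have h3 := hN (n + 1) (by omega)
    have h4 := hstep n
    have e1 := min_le_left δ (ε / 2)
    have e2 := min_le_right δ (ε / 2)
    rw [hHe (n + 1)]
    rcases max_cases (B.wdist φ (x (n + 1)) (x (n + 1 + 2)))
      (B.wdist φ (x (n + 1)) (x (n + 1 + 1))) with ⟨e, -⟩ | ⟨e, -⟩ <;> rw [e] <;> linarith
  refine squeeze_zero (fun n => B.nonneg _ _) (fun n => ?_) hlim
  have h1 : B.wdist φ (x n) (x (n + 2)) ≤ H n := le_max_left _ _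
  rw [wdist] at h1
  linarith [hφ0 (x n), hφ0 (x (n + 2))]

/-! ### Convergence of Picard orbits to a fixed point -/

theorem orbit_cauchy (hs : 1 ≤ s) (hφ0 : ∀ x, 0 ≤ φ x) (hG : B.GapContr T φ)
    (hx : ∀ n, x (n + 1) = T (x n)) (hne : ∀ n, x n ≠ x (n + 1)) : B.IsCauchySeq x := by
  have hinj := orbit_injective hs hφ0 hG hx hne
  intro ε hε
  -- `s * (ε + 2) + 2` bounds `M` once the small quantities are at most `1`.
  obtain ⟨δ, hδ, hg⟩ := hG.2 ε (s * (ε + 2) + 2) hε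
  -- `η` is chosen so that `2 * s ^ 2 * η + 2 * η < δ`.
  obtain ⟨η, hη, hη1, hηε, hηδ⟩ :
      ∃ η > 0, η ≤ 1 ∧ η ≤ ε ∧ 2 * s ^ 2 * η + 2 * η < δ := by
    have hp : 0 < 2 * s ^ 2 + 2 := by positivity
    refine ⟨min 1 (min ε (δ / (2 * (2 * s ^ 2 + 2)))), by positivity, min_le_left _ _,
      (min_le_right _ _).trans (min_le_left _ _), ?_⟩
    have h1 : min 1 (min ε (δ / (2 * (2 * s ^ 2 + 2)))) ≤ δ / (2 * (2 * s ^ 2 + 2)) :=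
      (min_le_right _ _).trans (min_le_right _ _)
    rw [le_div_iff₀ (by positivity)] at h1
    linarith
  obtain ⟨N, hN⟩ := eventually_atTop.1
    (((orbit_step_tendsto hs hφ0 hG hx).eventually_lt_const hη).and
      ((orbit_two_step_tendsto hs hφ0 hG hx).eventually_lt_const hε))
  have hw : ∀ n ≥ N, B.wdist φ (x n) (x (n + 1)) < η := fun n hn => (hN n hn).1
  have hsmall : ∀ n ≥ N, B.d (x n) (x (n + 1)) < η ∧ φ (x n) < η := by
    intro n hn
    have h := hw n hn
    rw [wdist] at h
    have := B.nonneg (x n) (x (n + 1))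
    have := hφ0 (x n)
    have := hφ0 (x (n + 1))
    exact ⟨by linarith, by linarith⟩
  have key : ∀ k m, N ≤ m → B.d (x m) (x (m + k)) < ε := by
    intro k
    induction k using Nat.strong_induction_on with
    | _ k ih =>
    intro m hm
    match k, ih with
    | 0, _ => simpa [(B.eq_iff (x m) (x m)).2 rfl] using hε
    | 1, _ => exact (hsmall m hm).1.trans_le hηε
    | 2, _ => exact (hN m hm).2
    | j + 3, ih =>
      by_contra! hge
      have hj := ih (j + 1) (by omega) m hm
      have r1 := B.rect (x m) (x (m + (j + 3))) (x (m + (j + 1))) (x (m + (j + 1) + 1))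
        (hinj.ne (by omega)) (hinj.ne (by omega)) (hinj.ne (by omega)) (hinj.ne (by omega))
        (hinj.ne (by omega))
      have a1 := (hsmall (m + (j + 1)) (by omega)).1
      have a2 : B.d (x (m + (j + 1) + 1)) (x (m + (j + 3))) < η :=
        (hsmall (m + (j + 1) + 1) (by omega)).1
      have r2 := B.rect (x m) (x (m + (j + 3))) (x (m + 1)) (x (m + (j + 3) + 1))
        (hinj.ne (by omega)) (hinj.ne (by omega)) (hinj.ne (by omega)) (hinj.ne (by omega))
        (hinj.ne (by omega))
      rw [B.symm (x (m + (j + 3) + 1))] at r2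
      have b1 := hsmall m hm
      have b2 := hsmall (m + (j + 3)) (by omega)
      have w1 := hw m hm
      have w2 := hw (m + (j + 3)) (by omega)
      have hMle : B.Mfun T φ (x m) (x (m + (j + 3))) ≤ B.d (x m) (x (m + (j + 3))) + 2 * η := by
        rw [Mfun_eq, ← hx, ← hx, wdist]
        exact max_le (by linarith) (max_le (by linarith) (by linarith))
      have hMge : B.d (x m) (x (m + (j + 3))) ≤ B.Mfun T φ (x m) (x (m + (j + 3))) :=
        (by linarith [hφ0 (x m), hφ0 (x (m + (j + 3)))] :
          _ ≤ B.d (x m) (x (m + (j + 3))) + φ (x m) + φ (x (m + (j + 3)))).trans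
          (le_max_left _ _)
      have hdK : B.d (x m) (x (m + (j + 3))) ≤ s * (ε + 2) :=
        r1.trans (mul_le_mul_of_nonneg_left (by linarith) (by linarith))
      have h1 := hg _ _ (hge.trans hMge) (by linarith)
      rw [← hx, ← hx] at h1
      have h2 : s * B.d (x m) (x (m + (j + 3))) ≤
          s * (s * (2 * η + B.d (x (m + 1)) (x (m + (j + 3) + 1)))) :=
        mul_le_mul_of_nonneg_left
          (r2.trans (mul_le_mul_of_nonneg_left (by linarith) (by linarith))) (by linarith)
      have h3 : B.d (x m) (x (m + (j + 3))) ≤ s * B.d (x m) (x (m + (j + 3))) :=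
        le_mul_of_one_le_left (B.nonneg _ _) hs
      have p1 := hφ0 (x (m + 1))
      have p2 := hφ0 (x (m + (j + 3) + 1))
      linarith
  refine ⟨N, fun m hm n hn => ?_⟩
  rcases le_total m n with h | h
  · simpa [Nat.add_sub_cancel' h] using key (n - m) m hm
  · rw [B.symm]
    simpa [Nat.add_sub_cancel' h] using key (m - n) n hn

theorem orbit_limit_fixed (hs : 1 ≤ s) (hφ0 : ∀ x, 0 ≤ φ x) (hφ : B.LSC φ)
    (hG : B.GapContr T φ) (hx : ∀ n, x (n + 1) = T (x n)) (hne : ∀ n, x n ≠ x (n + 1)) {z : X}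
    (hz : B.TendstoSeq x z) : T z = z := by
  have hinj := orbit_injective hs hφ0 hG hx hne
  have hw := orbit_step_tendsto hs hφ0 hG hx
  have hφz : φ z = 0 := by
    have hlim : Tendsto (fun n => φ (x n)) atTop (𝓝 0) :=
      squeeze_zero (fun n => hφ0 _) (fun n => by
        rw [wdist]; linarith [B.nonneg (x n) (x (n + 1)), hφ0 (x (n + 1))]) hw
    have h := hφ x z hz
    rw [hlim.liminf_eq] at h
    exact le_antisymm h (hφ0 z)
  by_contra hTz
  have hd : 0 < B.d z (T z) :=
    lt_of_le_of_ne (B.nonneg _ _) (fun e => hTz ((B.eq_iff _ _).1 e.symm).symm)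
  have hc : B.wdist φ z (T z) = B.d z (T z) + φ (T z) := by rw [wdist, hφz, add_zero]
  have hcp : 0 < B.wdist φ z (T z) := by linarith [hφ0 (T z)]
  obtain ⟨δ, hδ, hg⟩ := hG.2 _ (B.wdist φ z (T z)) hcp
  have hne' : ∀ y, ∀ᶠ n in atTop, x n ≠ y := fun y => by
    rw [← Nat.cofinite_eq_atTop]
    exact hinj.tendsto_cofinite.eventually (eventually_cofinite_ne y)
  have hsp : 0 < s := by linarith
  have hη : 0 < min (B.wdist φ z (T z) / 2) (δ / (4 * s)) := by positivity
  obtain ⟨n, h1, h2, h3, h4, h5, h6⟩ := ((hw.eventually_lt_const hη).and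
    ((hz.eventually_lt_const hη).and ((hne' z).and ((hne' (T z)).and
      (((tendsto_add_atTop_nat 1).eventually (hne' z)).and
        ((tendsto_add_atTop_nat 1).eventually (hne' (T z)))))))).exists
  have e1 := min_le_left (B.wdist φ z (T z) / 2) (δ / (4 * s))
  have e2 := min_le_right (B.wdist φ z (T z) / 2) (δ / (4 * s))
  set η := min (B.wdist φ z (T z) / 2) (δ / (4 * s))
  rw [le_div_iff₀ (by positivity)] at e2
  have q1 := B.nonneg (x n) (x (n + 1))
  have q2 := hφ0 (x n)
  have q3 := hφ0 (x (n + 1))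
  have h1' := h1
  rw [wdist] at h1'
  have hM : B.Mfun T φ (x n) z = B.wdist φ z (T z) := by
    rw [Mfun_eq, ← hx, max_eq_right (h1.le.trans (by linarith)), max_eq_right]
    rw [show B.wdist φ (x n) z = B.d (x n) z + φ (x n) by rw [wdist, hφz, add_zero]]
    linarith
  have g := hg (x n) z hM.ge hM.le
  rw [hM, ← hx, hc] at g
  have r := B.rect z (T z) (x n) (x (n + 1)) (hne n) h3 h4 h5 h6
  rw [B.symm z (x n)] at r
  have r1 : s * (B.d (x n) z + B.d (x n) (x (n + 1)) + B.d (x (n + 1)) (T z)) ≤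
      s * (2 * η + B.d (x (n + 1)) (T z)) :=
    mul_le_mul_of_nonneg_left (by linarith) hsp.le
  have r2 : s * B.d (x (n + 1)) (T z) ≤ s ^ 2 * B.d (x (n + 1)) (T z) :=
    mul_le_mul_of_nonneg_right (by nlinarith) (B.nonneg _ _)
  linarith

end

/-! ### The fixed point theorem -/

theorem stmt13 {X : Type*} [Nonempty X] {s : ℝ} (hs : 1 ≤ s) (B : RectBMetric X s)
    (hcomp : B.Complete) (T : X → X) (φ : X → ℝ) (hφ0 : ∀ x, 0 ≤ φ x)
    (hφ : B.LSC φ) (ψ ϕ : ℝ → ℝ) (hψ : AlteringDistance ψ) (hϕ : PhiU ϕ)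
    (a : ℝ) (ha : 1 < a)
    (hcontr : ∀ x y : X,
      ψ (s ^ 2 * B.d (T x) (T y) + φ (T x) + φ (T y)) ≤
        ψ (B.Mfun T φ x y) * Real.logb (a + ϕ (B.Mfun T φ x y)) a) :
    ∃! z : X, T z = z := by
  have hG : B.GapContr T φ := gapContr_of_log hφ0 hψ hϕ ha hcontr
  suffices h : ∃ z, T z = z by
    obtain ⟨z, hz⟩ := h
    exact ⟨z, hz, fun w hw => fixed_unique hs hφ0 hG hw hz⟩
  obtain ⟨x₀⟩ := ‹Nonempty X›
  have hx : ∀ n, T^[n + 1] x₀ = T (T^[n] x₀) := fun n => Function.iterate_succ_apply' T n x₀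
  by_cases hne : ∀ n, T^[n] x₀ ≠ T^[n + 1] x₀
  · obtain ⟨z, hz⟩ := hcomp _ (orbit_cauchy (x := fun n => T^[n] x₀) hs hφ0 hG hx hne)
    exact ⟨z, orbit_limit_fixed hs hφ0 hφ hG hx hne hz⟩
  · push Not at hne
    obtain ⟨n, hn⟩ := hne
    exact ⟨T^[n] x₀, by rw [← hx, ← hn]⟩
end
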